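/- Let m, p be positive integers with m ≤ p and let d ∈ (0,1]. If r ∈ (0,1) is a root of the equation r^{2(p−m)} − (8+4d) r^{p−m} + 4(1+d)(3+d) r^{2p} + 4 = 0, then r^{p+m} ≤ 1/(3+d). -/

import Mathlib

/-- Lemma: if `m ≤ p`, `d ∈ (0,1]`, and `r ∈ (0,1)` is a root of
`r^(2(p-m)) - (8+4d) r^(p-m) + 4(1+d)(3+d) r^(2p) + 4 = 0`, then `r^(p+m) ≤ 1/(3+d)`. -/
theorem radius_estimate_r_pmd
    (m p : ℕ) (hm : 0 < m) (hp : 0 < p) (hmp : m ≤ p)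
    (d : ℝ) (hd : d ∈ Set.Ioc (0:ℝ) 1)
    (r : ℝ) (hr : r ∈ Set.Ioo (0:ℝ) 1)
    (heq : r ^ (2 * (p - m)) - (8 + 4 * d) * r ^ (p - m)
      + 4 * (1 + d) * (3 + d) * r ^ (2 * p) + 4 = 0) :
    r ^ (p + m) ≤ 1 / (3 + d) := by
  obtain ⟨hd0, hd1⟩ := hd
  have hx : 0 < r ^ (p - m) := pow_pos hr.1 _
  have e1 : r ^ (2 * (p - m)) = r ^ (p - m) * r ^ (p - m) := by
    rw [← pow_add]; congr 1; omega
  have e2 : r ^ (2 * p) = r ^ (p - m) * r ^ (p + m) := by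
    rw [← pow_add]; congr 1; omega
  rw [e1, e2] at heq
  rw [le_div_iff₀ (by linarith)]
  generalize r ^ (p - m) = x at *
  generalize r ^ (p + m) = y at *
  by_contra h
  push Not at h
  have h2 : 0 < (1 + d) * x * (y * (3 + d) - 1) :=
    mul_pos (mul_pos (by linarith) hx) (by linarith)
  nlinarith [sq_nonneg (x - 2)]
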